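/- Let r > 0 be a real number, q ∈ (0,1), c > 0, and define p_t(x,z) as the transition kernel p_Θ with parameter Θ = Θ_t = (1-q)/(e^{ct}-q). Then for every natural number i, (p_t(i, i) - 1)/t → -(c·i/(1-q) + c·q·(i+r)/(1-q)) as t → 0⁺; that is, the total rate of leaving state i is ci/(1-q) + cq(i+r)/(1-q). -/

import Mathlib

open Filter Topology

/-- Transition kernel p_Θ(x, z) = ∑_{y=0}^{min(x,z)}
    Γ(z+r)/((z-y)! Γ(y+r)) · [q(1-Θ)]^{z-y} · [1-q(1-Θ)]^{r+y} · C(x,y) Θ^y (1-Θ)^{x-y}. -/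
noncomputable def pKer (r q Θ : ℝ) (x z : ℕ) : ℝ :=
  ∑ y ∈ Finset.range (min x z + 1),
    Real.Gamma ((z : ℝ) + r) / (((z - y).factorial : ℝ) * Real.Gamma ((y : ℝ) + r)) *
      (q * (1 - Θ)) ^ (z - y) * (1 - q * (1 - Θ)) ^ (r + (y : ℝ)) *
      (x.choose y : ℝ) * Θ ^ y * (1 - Θ) ^ (x - y)

/-!
The chain sits at `Θ = 1` when `t = 0`, and in the diagonal entry `p_Θ(i, i)` the `y`-th summand
carries the factor `(1 - Θ) ^ (2 (i - y))`. So every summand with `y < i` vanishes to second order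
at `Θ = 1`, and to first order `p_Θ(i, i)` is the last summand `[1 - q(1 - Θ)] ^ (r + i) Θ ^ i`,
with derivative `q (r + i) + i`. The rate follows from the chain rule, since `Θ_t` has derivative
`-c / (1 - q)` at `t = 0`.
-/

lemma hasDerivAt_mul_sub_pow_of_continuousAt {𝕜 : Type*} [NontriviallyNormedField 𝕜] {f : 𝕜 → 𝕜}
    {a : 𝕜} {n : ℕ} (hf : ContinuousAt f a) (hn : 1 < n) :
    HasDerivAt (fun x => f x * (a - x) ^ n) 0 a := by
  have hO : (fun x => f x * (a - x) ^ n) =O[𝓝 a] fun x => ‖x - a‖ ^ n := by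
    have hpow : (fun x => (a - x) ^ n) =O[𝓝 a] fun x => ‖x - a‖ ^ n :=
      Asymptotics.isBigO_of_le _ fun x => by simp [norm_sub_rev]
    simpa using (hf.isBigO_one ℝ).mul hpow
  simpa using (hO.hasFDerivAt hn).hasDerivAt

lemma hasDerivAt_one_sub_mul_one_sub_rpow_one (q s : ℝ) :
    HasDerivAt (fun Θ : ℝ => (1 - q * (1 - Θ)) ^ s) (q * s) 1 := by
  have hbase : HasDerivAt (fun Θ : ℝ => 1 - q * (1 - Θ)) q 1 := by
    simpa using (((hasDerivAt_id (1 : ℝ)).const_sub 1).const_mul q).const_sub 1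
  simpa using hbase.rpow_const (p := s) (Or.inl (by norm_num))

section Diagonal

variable {r : ℝ} {i : ℕ}

lemma pKer_self_eq_sum_add (q Θ : ℝ) (hΓ : Real.Gamma (i + r) ≠ 0) :
    pKer r q Θ i i =
      ∑ y ∈ Finset.range i,
        Real.Gamma (i + r) / ((i - y).factorial * Real.Gamma (y + r)) * q ^ (i - y) * i.choose y *
          (1 - q * (1 - Θ)) ^ (r + y) * Θ ^ y * (1 - Θ) ^ (2 * (i - y)) +
      (1 - q * (1 - Θ)) ^ (r + i) * Θ ^ i := by
  rw [pKer, min_self, Finset.sum_range_succ]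
  congr 1
  · exact Finset.sum_congr rfl fun y _ => by rw [mul_pow, two_mul, pow_add]; ring
  · simp [hΓ]

lemma pKer_one_self (q : ℝ) (hΓ : Real.Gamma (i + r) ≠ 0) : pKer r q 1 i i = 1 := by
  rw [pKer_self_eq_sum_add q 1 hΓ, Finset.sum_eq_zero]
  · simp
  · intro y hy
    have : i - y ≠ 0 := Nat.sub_ne_zero_of_lt (Finset.mem_range.mp hy)
    simp [this]

lemma hasDerivAt_pKer_self_one (q : ℝ) (hΓ : Real.Gamma (i + r) ≠ 0) :
    HasDerivAt (fun Θ => pKer r q Θ i i) (q * (r + i) + i) 1 := by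
  simp only [pKer_self_eq_sum_add q _ hΓ]
  have hlast : HasDerivAt (fun Θ : ℝ => (1 - q * (1 - Θ)) ^ (r + i) * Θ ^ i)
      (q * (r + i) + i) 1 := by
    simpa using (hasDerivAt_one_sub_mul_one_sub_rpow_one q (r + i)).fun_mul (hasDerivAt_pow i 1)
  have hterm (a : ℝ) {y : ℕ} (hy : y < i) : HasDerivAt
      (fun Θ : ℝ => a * (1 - q * (1 - Θ)) ^ (r + y) * Θ ^ y * (1 - Θ) ^ (2 * (i - y))) 0 1 := by
    have hrpow := (hasDerivAt_one_sub_mul_one_sub_rpow_one q (r + y)).continuousAt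
    exact hasDerivAt_mul_sub_pow_of_continuousAt (by fun_prop) (by lia)
  simpa using (HasDerivAt.fun_sum fun y hy => hterm _ (Finset.mem_range.mp hy)).fun_add hlast

end Diagonal

/-- The dependence parameter `Θ_t = (1 - q) / (e ^ (c t) - q)` at time `t`; the transition kernel
over time `t` is `pKer r q (dependenceParam q c t)`. -/
noncomputable def dependenceParam (q c t : ℝ) : ℝ :=
  (1 - q) / (Real.exp (c * t) - q)

section Rate

variable {r q : ℝ}

lemma dependenceParam_zero (c : ℝ) (hq : q ≠ 1) : dependenceParam q c 0 = 1 := by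
  simp [dependenceParam, sub_ne_zero.mpr hq.symm]

lemma hasDerivAt_dependenceParam_zero (c : ℝ) (hq : q ≠ 1) :
    HasDerivAt (dependenceParam q c) (-c / (1 - q)) 0 := by
  have hq' : 1 - q ≠ 0 := sub_ne_zero.mpr hq.symm
  have hden : HasDerivAt (fun t => Real.exp (c * t) - q) c 0 := by
    simpa using ((hasDerivAt_id (0 : ℝ)).const_mul c).exp.sub_const q
  refine ((hasDerivAt_const 0 (1 - q)).fun_div hden (by simpa using hq')).congr_deriv ?_
  simp only [mul_zero, Real.exp_zero]
  field_simp
  ring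

lemma hasDerivAt_pKer_self_dependenceParam_zero {i : ℕ} (c : ℝ) (hΓ : Real.Gamma (i + r) ≠ 0)
    (hq : q ≠ 1) :
    HasDerivAt (fun t => pKer r q (dependenceParam q c t) i i)
      (-(c * i / (1 - q) + c * q * (i + r) / (1 - q))) 0 :=
  ((hasDerivAt_pKer_self_one q hΓ).comp_of_eq 0 (hasDerivAt_dependenceParam_zero c hq)
    (dependenceParam_zero c hq).symm).congr_deriv (by ring)

theorem pKer_holding_rate_general (c : ℝ) (hr : ∀ m : ℕ, r ≠ -m) (hq : q ≠ 1) (i : ℕ) :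
    Tendsto (fun t => (pKer r q (dependenceParam q c t) i i - 1) / t) (𝓝[≠] 0)
      (𝓝 (-(c * i / (1 - q) + c * q * (i + r) / (1 - q)))) := by
  have hΓ : Real.Gamma (i + r) ≠ 0 :=
    Real.Gamma_ne_zero fun m h => hr (i + m) (by push_cast; linarith)
  simpa [dependenceParam_zero c hq, pKer_one_self q hΓ, div_eq_inv_mul] using
    (hasDerivAt_pKer_self_dependenceParam_zero c hΓ hq).tendsto_slope_zero

end Rate

/-- Total holding rate: with Θ_t = (1-q)/(e^{ct}-q),
    (p_t(i,i) - 1)/t → -(c·i/(1-q) + c·q·(i+r)/(1-q)) as t → 0⁺. -/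
theorem pKer_holding_rate
    (r q c : ℝ) (hr : 0 < r) (hq : q ∈ Set.Ioo (0 : ℝ) 1) (hc : 0 < c)
    (i : ℕ) :
    Tendsto (fun t : ℝ => (pKer r q ((1 - q) / (Real.exp (c * t) - q)) i i - 1) / t)
      (𝓝[>] (0 : ℝ))
      (𝓝 (-(c * i / (1 - q) + c * q * ((i : ℝ) + r) / (1 - q)))) := by
  have hr' (m : ℕ) : r ≠ -m := ((neg_nonpos.mpr m.cast_nonneg).trans_lt hr).ne'
  exact (pKer_holding_rate_general c hr' hq.2.ne i).mono_left (nhdsGT_le_nhdsNE 0)
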